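/- Fix T > 0, ε > 0, c ≥ 0 and p ∈ (0,1]. Then there exists a unique family (φᵏ)_{k∈ℕ} of continuously differentiable functions φᵏ : [0,T] → ℝ solving the directed-chain Riccati system: (φ⁰)'(t) = φ⁰(t)² − pε with φ⁰(T) = pc; (φ¹)'(t) = 2·φ⁰(t)·φ¹(t) + pε with φ¹(T) = −pc; and for every k ≥ 2, (φᵏ)'(t) = ∑_{j=0}^{k} φʲ(t)·φ^{k−j}(t) with φᵏ(T) = 0. -/

import Mathlib

/-!
The system is triangular. The equation for `φ 0` is a scalar Riccati equation, solved explicitly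
by `φ⁰ = -y'/y`, where `y'' = pε y` and `y > 0` on `[0, T]`. Every later equation is a scalar
linear ODE `φ' = b φ + g` with continuous coefficients, because the only terms of the convolution
sum that contain `φ k` are the two extreme ones, `φ 0 * φ k` and `φ k * φ 0`
(`sum_conv_eq`). Existence is then the variation-of-constants formula
(`linSol_hasDerivWithinAt`) and strong induction on `k`.

For uniqueness, the difference of two solutions of the same equation satisfies `d' = b d`,
`d T = 0` with `b` continuous, so it vanishes (`eq_zero_of_linear`); for `k = 0` the coefficient is
`b = φ⁰ + ψ⁰`.
-/

open Real

/-- The directed-chain Riccati system with horizon `T`, running-cost weight `ε`,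
terminal-cost weight `c` and interaction probability `p`:
`(φ⁰)' = (φ⁰)² − pε`, `φ⁰(T) = pc`; `(φ¹)' = 2φ⁰φ¹ + pε`, `φ¹(T) = −pc`;
and `(φᵏ)' = ∑_{j=0}^{k} φʲ φ^{k−j}`, `φᵏ(T) = 0` for `k ≥ 2`. -/
def DirectedChainRiccati (T ε c p : ℝ) (φ : ℕ → ℝ → ℝ) : Prop :=
  (∀ k, ContDiffOn ℝ 1 (φ k) (Set.Icc 0 T)) ∧
  (∀ t ∈ Set.Icc (0:ℝ) T,
    HasDerivWithinAt (φ 0) ((φ 0 t) ^ 2 - p * ε) (Set.Icc 0 T) t) ∧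
  φ 0 T = p * c ∧
  (∀ t ∈ Set.Icc (0:ℝ) T,
    HasDerivWithinAt (φ 1) (2 * φ 0 t * φ 1 t + p * ε) (Set.Icc 0 T) t) ∧
  φ 1 T = -(p * c) ∧
  (∀ k, 2 ≤ k →
    (∀ t ∈ Set.Icc (0:ℝ) T,
      HasDerivWithinAt (φ k) (∑ j ∈ Finset.range (k + 1), φ j t * φ (k - j) t)
        (Set.Icc 0 T) t) ∧
    φ k T = 0)

/-- The retraction of `ℝ` onto `[0, T]`. -/
def clampIcc (T x : ℝ) : ℝ := max 0 (min x T)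

lemma continuous_comp_clampIcc {T : ℝ} (hT : 0 < T) {b : ℝ → ℝ}
    (hb : ContinuousOn b (Set.Icc 0 T)) : Continuous fun x => b (clampIcc T x) := by
  refine hb.comp_continuous (by unfold clampIcc; fun_prop) fun x => ?_
  exact ⟨le_max_left _ _, max_le hT.le (min_le_right _ _)⟩

lemma clampIcc_of_mem {T t : ℝ} (ht : t ∈ Set.Icc 0 T) : clampIcc T t = t := by
  unfold clampIcc
  rw [min_eq_left ht.2, max_eq_right ht.1]

/-- The primitive of `b` on `[0, T]` vanishing at `T`. The integrand is precomposed with the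
retraction onto `[0, T]`, so that it is continuous on all of `ℝ` as soon as `b` is continuous
on `[0, T]`. -/
noncomputable def primitiveFrom (T : ℝ) (b : ℝ → ℝ) (t : ℝ) : ℝ :=
  ∫ x in T..t, b (clampIcc T x)

lemma primitiveFrom_self (T : ℝ) (b : ℝ → ℝ) : primitiveFrom T b T = 0 := by
  simp [primitiveFrom]

lemma primitiveFrom_hasDerivWithinAt {T : ℝ} (hT : 0 < T) {b : ℝ → ℝ}
    (hb : ContinuousOn b (Set.Icc 0 T)) {t : ℝ} (ht : t ∈ Set.Icc 0 T) :
    HasDerivWithinAt (primitiveFrom T b) (b t) (Set.Icc 0 T) t := by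
  have h := (continuous_comp_clampIcc hT hb).integral_hasStrictDerivAt T t
  rw [clampIcc_of_mem ht] at h
  exact h.hasDerivAt.hasDerivWithinAt

/-- The variation-of-constants solution of `φ' = b φ + g` on `[0, T]` with `φ T = a`. -/
noncomputable def linSol (T : ℝ) (b g : ℝ → ℝ) (a t : ℝ) : ℝ :=
  exp (primitiveFrom T b t) *
    (a + primitiveFrom T (fun x => exp (-primitiveFrom T b x) * g x) t)

lemma linSol_terminal (T : ℝ) (b g : ℝ → ℝ) (a : ℝ) : linSol T b g a T = a := by
  simp [linSol, primitiveFrom_self]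

lemma linSol_hasDerivWithinAt {T : ℝ} (hT : 0 < T) {b g : ℝ → ℝ}
    (hb : ContinuousOn b (Set.Icc 0 T)) (hg : ContinuousOn g (Set.Icc 0 T)) (a : ℝ)
    {t : ℝ} (ht : t ∈ Set.Icc 0 T) :
    HasDerivWithinAt (linSol T b g a) (b t * linSol T b g a t + g t) (Set.Icc 0 T) t := by
  have hB := fun {s : ℝ} (hs : s ∈ Set.Icc 0 T) => primitiveFrom_hasDerivWithinAt hT hb hs
  have hBc : ContinuousOn (primitiveFrom T b) (Set.Icc 0 T) :=
    fun s hs => (hB hs).continuousWithinAt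
  have hG := primitiveFrom_hasDerivWithinAt hT
    (b := fun x => exp (-primitiveFrom T b x) * g x) (hBc.neg.rexp.mul hg) ht
  have h := (hB ht).exp.mul (hG.const_add a)
  refine h.congr_deriv ?_
  have he : exp (primitiveFrom T b t) * exp (-primitiveFrom T b t) = 1 := by
    rw [← exp_add]; simp
  simp only [linSol]
  linear_combination g t * he

lemma eq_zero_of_linear {T : ℝ} (hT : 0 < T) {b d : ℝ → ℝ}
    (hb : ContinuousOn b (Set.Icc 0 T))
    (hd : ∀ t ∈ Set.Icc 0 T, HasDerivWithinAt d (b t * d t) (Set.Icc 0 T) t)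
    (hdT : d T = 0) : ∀ t ∈ Set.Icc 0 T, d t = 0 := by
  intro t ht
  -- The integrating factor `exp (-B)` turns the equation into `(d * exp (-B))' = 0`.
  have hF : ∀ s ∈ Set.Icc 0 T,
      HasDerivWithinAt (fun s => d s * exp (-primitiveFrom T b s)) 0 (Set.Icc 0 T) s := by
    intro s hs
    refine ((hd s hs).mul (primitiveFrom_hasDerivWithinAt hT hb hs).neg.exp).congr_deriv ?_
    simp only [Pi.neg_apply]
    ring
  have h := (convex_Icc (0 : ℝ) T).norm_image_sub_le_of_norm_hasDerivWithin_le (C := 0)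
    hF (by simp) ht (Set.right_mem_Icc.2 hT.le)
  have h' : d t * exp (-primitiveFrom T b t) = 0 := by
    rw [zero_mul, norm_le_zero_iff, hdT, zero_mul, zero_sub, neg_eq_zero] at h
    exact h
  exact (mul_eq_zero.1 h').resolve_right (exp_pos _).ne'

/-- The terms of the convolution sum of index `n + 2` that contain the last unknown are split off;
the rest only involves the indices `1, …, n + 1`. -/
lemma sum_conv_eq (φ : ℕ → ℝ) (n : ℕ) :
    ∑ j ∈ Finset.range (n + 2 + 1), φ j * φ (n + 2 - j) =
      2 * φ 0 * φ (n + 2) + ∑ j : Fin (n + 1), φ (j + 1) * φ (n + 1 - j) := by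
  rw [Finset.sum_range_succ, Finset.sum_range_succ',
    ← Fin.sum_univ_eq_sum_range (fun j => φ (j + 1) * φ (n + 2 - (j + 1)))]
  have h (j : ℕ) : n + 2 - (j + 1) = n + 1 - j := by omega
  simp only [h, Nat.sub_self, Nat.sub_zero]
  ring

/-- The solution `m (m sinh (m s) + q cosh (m s)) / (m cosh (m s) + q sinh (m s))`, `s = T - t`,
of the Riccati equation `φ' = φ² - m²` with `φ T = q`. -/
noncomputable def riccatiSol (T m q t : ℝ) : ℝ :=
  m * (m * sinh (m * (T - t)) + q * cosh (m * (T - t))) /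
    (m * cosh (m * (T - t)) + q * sinh (m * (T - t)))

lemma riccatiSol_terminal {T m q : ℝ} (hm : 0 < m) : riccatiSol T m q T = q := by
  simp [riccatiSol, hm.ne']

lemma riccatiSol_hasDerivAt {T m q t : ℝ} (hm : 0 < m) (hq : 0 ≤ q) (ht : t ≤ T) :
    HasDerivAt (riccatiSol T m q) (riccatiSol T m q t ^ 2 - m ^ 2) t := by
  have hs : 0 ≤ sinh (m * (T - t)) := sinh_nonneg_iff.2 (mul_nonneg hm.le (sub_nonneg.2 ht))
  have hy : m * cosh (m * (T - t)) + q * sinh (m * (T - t)) ≠ 0 := by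
    have := cosh_pos (m * (T - t))
    positivity
  have hl : HasDerivAt (fun t => m * (T - t)) (m * (-1)) t :=
    ((hasDerivAt_id t).const_sub T).const_mul m
  have h := (((hl.sinh.const_mul m).add (hl.cosh.const_mul q)).const_mul m).div
    ((hl.cosh.const_mul m).add (hl.sinh.const_mul q)) hy
  refine h.congr_deriv ?_
  simp only [riccatiSol, Pi.add_apply]
  field_simp
  ring

/-- The solution of the directed-chain Riccati system, built by strong recursion: each entry after
the first solves a linear equation whose inhomogeneity involves the previous entries only. -/
noncomputable def chainSol (T ε c p : ℝ) : ℕ → ℝ → ℝ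
  | 0 => riccatiSol T (√(p * ε)) (p * c)
  | 1 => linSol T (fun t => 2 * riccatiSol T (√(p * ε)) (p * c) t) (fun _ => p * ε) (-(p * c))
  | n + 2 => linSol T (fun t => 2 * riccatiSol T (√(p * ε)) (p * c) t)
      (fun t => ∑ j : Fin (n + 1), chainSol T ε c p (j + 1) t * chainSol T ε c p (n + 1 - j) t) 0
  termination_by k => k
  decreasing_by all_goals omega

lemma contDiffOn_one_of_hasDerivWithinAt {T : ℝ} (hT : 0 < T) {f f' : ℝ → ℝ}
    (h : ∀ t ∈ Set.Icc 0 T, HasDerivWithinAt f (f' t) (Set.Icc 0 T) t)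
    (hf' : ContinuousOn f' (Set.Icc 0 T)) : ContDiffOn ℝ 1 f (Set.Icc 0 T) := by
  have hu := uniqueDiffOn_Icc hT
  rw [show (1 : WithTop ℕ∞) = 0 + 1 by simp, contDiffOn_succ_iff_derivWithin hu]
  refine ⟨fun t ht => (h t ht).differentiableWithinAt, by simp, contDiffOn_zero.2 ?_⟩
  exact hf'.congr fun t ht => (h t ht).derivWithin (hu t ht)

lemma directedChainRiccati_chainSol {T ε c p : ℝ} (hT : 0 < T) (hε : 0 < ε) (hc : 0 ≤ c)
    (hp : 0 < p) : DirectedChainRiccati T ε c p (chainSol T ε c p) := by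
  have hm : 0 < √(p * ε) := sqrt_pos.2 (mul_pos hp hε)
  have h0 : ∀ t ∈ Set.Icc 0 T, HasDerivWithinAt (chainSol T ε c p 0)
      (chainSol T ε c p 0 t ^ 2 - p * ε) (Set.Icc 0 T) t := by
    intro t ht
    have h := riccatiSol_hasDerivAt hm (mul_nonneg hp.le hc) ht.2
    rw [sq_sqrt (mul_pos hp hε).le] at h
    rw [chainSol]
    exact h.hasDerivWithinAt
  have c0 : ContinuousOn (chainSol T ε c p 0) (Set.Icc 0 T) :=
    fun t ht => (h0 t ht).continuousWithinAt
  have cb : ContinuousOn (fun t => 2 * riccatiSol T (√(p * ε)) (p * c) t) (Set.Icc 0 T) := by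
    rw [chainSol] at c0
    exact continuousOn_const.mul c0
  have h1 : ∀ t ∈ Set.Icc 0 T, HasDerivWithinAt (chainSol T ε c p 1)
      (2 * chainSol T ε c p 0 t * chainSol T ε c p 1 t + p * ε) (Set.Icc 0 T) t := by
    intro t ht
    rw [chainSol, chainSol]
    exact linSol_hasDerivWithinAt hT cb continuousOn_const _ ht
  have hstep : ∀ n, (∀ k < n + 2, ContinuousOn (chainSol T ε c p k) (Set.Icc 0 T)) →
      ∀ t ∈ Set.Icc 0 T, HasDerivWithinAt (chainSol T ε c p (n + 2))
        (∑ j ∈ Finset.range (n + 2 + 1), chainSol T ε c p j t * chainSol T ε c p (n + 2 - j) t)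
        (Set.Icc 0 T) t := by
    intro n hn t ht
    rw [sum_conv_eq (fun k => chainSol T ε c p k t), chainSol.eq_1, chainSol.eq_3]
    refine linSol_hasDerivWithinAt hT cb (continuousOn_finsetSum _ fun j _ => ?_) _ ht
    exact (hn _ (by omega)).mul (hn _ (by omega))
  have hcont : ∀ k, ContinuousOn (chainSol T ε c p k) (Set.Icc 0 T) := by
    intro k
    induction k using Nat.strong_induction_on with
    | _ k ih =>
      match k with
      | 0 => exact c0
      | 1 => exact fun t ht => (h1 t ht).continuousWithinAt
      | n + 2 => exact fun t ht => (hstep n ih t ht).continuousWithinAt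
  refine ⟨fun k => ?_, h0, ?_, h1, ?_, fun k hk => ?_⟩
  · match k with
    | 0 => exact contDiffOn_one_of_hasDerivWithinAt hT h0 ((c0.pow 2).sub continuousOn_const)
    | 1 =>
      exact contDiffOn_one_of_hasDerivWithinAt hT h1
        (((continuousOn_const.mul c0).mul (hcont 1)).add continuousOn_const)
    | n + 2 =>
      exact contDiffOn_one_of_hasDerivWithinAt hT (hstep n fun k _ => hcont k)
        (continuousOn_finsetSum _ fun j _ => (hcont _).mul (hcont _))
  · rw [chainSol]; exact riccatiSol_terminal hm
  · rw [chainSol]; exact linSol_terminal _ _ _ _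
  · obtain ⟨n, rfl⟩ := Nat.exists_eq_add_of_le' hk
    refine ⟨hstep n fun k _ => hcont k, ?_⟩
    rw [chainSol]; exact linSol_terminal _ _ _ _

lemma directedChainRiccati_unique {T ε c p : ℝ} (hT : 0 < T) {φ ψ : ℕ → ℝ → ℝ}
    (hφ : DirectedChainRiccati T ε c p φ) (hψ : DirectedChainRiccati T ε c p ψ) (k : ℕ) :
    ∀ t ∈ Set.Icc (0 : ℝ) T, φ k t = ψ k t := by
  obtain ⟨cφ, φ0, φ0T, φ1, φ1T, φk⟩ := hφ
  obtain ⟨cψ, ψ0, ψ0T, ψ1, ψ1T, ψk⟩ := hψ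
  have e0 : ∀ t ∈ Set.Icc (0 : ℝ) T, φ 0 t = ψ 0 t := by
    intro t ht
    refine sub_eq_zero.1 (eq_zero_of_linear hT (b := fun t => φ 0 t + ψ 0 t)
      (d := fun t => φ 0 t - ψ 0 t) ((cφ 0).continuousOn.add (cψ 0).continuousOn)
      (fun s hs => ((φ0 s hs).sub (ψ0 s hs)).congr_deriv ?_) (by simp [φ0T, ψ0T]) t ht)
    ring
  have cb : ContinuousOn (fun t => 2 * φ 0 t) (Set.Icc 0 T) :=
    continuousOn_const.mul (cφ 0).continuousOn
  induction k using Nat.strong_induction_on with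
  | _ k ih =>
    intro t ht
    match k with
    | 0 => exact e0 t ht
    | 1 =>
      refine sub_eq_zero.1 (eq_zero_of_linear hT (d := fun t => φ 1 t - ψ 1 t) cb
        (fun s hs => ((φ1 s hs).sub (ψ1 s hs)).congr_deriv ?_) (by simp [φ1T, ψ1T]) t ht)
      rw [← e0 s hs]
      ring
    | n + 2 =>
      obtain ⟨dφ, φT⟩ := φk (n + 2) (by omega)
      obtain ⟨dψ, ψT⟩ := ψk (n + 2) (by omega)
      refine sub_eq_zero.1 (eq_zero_of_linear hT (d := fun t => φ (n + 2) t - ψ (n + 2) t) cb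
        (fun s hs => ((dφ s hs).sub (dψ s hs)).congr_deriv ?_) (by simp [φT, ψT]) t ht)
      rw [sum_conv_eq (fun k => φ k s), sum_conv_eq (fun k => ψ k s), ← e0 s hs]
      have hsum : ∑ j : Fin (n + 1), φ (j + 1) s * φ (n + 1 - j) s =
          ∑ j : Fin (n + 1), ψ (j + 1) s * ψ (n + 1 - j) s :=
        Finset.sum_congr rfl fun j _ => by
          rw [ih (j + 1) (by omega) s hs, ih (n + 1 - j) (by omega) s hs]
      rw [hsum]
      ring

/-- Existence and uniqueness (on `[0,T]`) of the solution of the directed-chain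
Riccati system. -/
theorem stmt_4 (T ε c p : ℝ) (hT : 0 < T) (hε : 0 < ε) (hc : 0 ≤ c)
    (hp : p ∈ Set.Ioc (0:ℝ) 1) :
    (∃ φ : ℕ → ℝ → ℝ, DirectedChainRiccati T ε c p φ) ∧
    (∀ φ ψ : ℕ → ℝ → ℝ, DirectedChainRiccati T ε c p φ → DirectedChainRiccati T ε c p ψ →
      ∀ k, ∀ t ∈ Set.Icc (0:ℝ) T, φ k t = ψ k t) := by
  exact ⟨⟨chainSol T ε c p, directedChainRiccati_chainSol hT hε hc hp.1⟩,
    fun _ _ hφ hψ => directedChainRiccati_unique hT hφ hψ⟩
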